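/- Let b₀ > 0 and let a : [0,∞) → ℝ satisfy ∫₀^R a(r)² r dr < ∞ for every R > 0, and suppose there is r₁ > 0 such that a is differentiable on [r₁,∞) with a'(r) = b₀ for all r ≥ r₁. Then for every n ≥ 1 there exist γ_n > 0 and k₀ > 0 such that for all k ≥ k₀, the min-max value with m = 0 satisfies μ_{n,0}(−k) ≤ (2n−1) b₀ − γ_n k⁻². -/

import Mathlib

open MeasureTheory Set Filter

noncomputable section

/-- A radial test function: smooth, compactly supported, with support in `(0,∞)`. -/
def IsTestR (g : ℝ → ℝ) : Prop :=
  ContDiff ℝ (⊤ : ℕ∞) g ∧ HasCompactSupport g ∧ tsupport g ⊆ Set.Ioi 0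

/-- The quadratic form
`l_m[g;p] = ∫₀^∞ (|g'|² + (m² - 1/4) r⁻² |g|² + (a(r)+p)² |g|²) dr`
of the fiber operator `L_m(p)` in `L²((0,∞))`. -/
def lForm (a : ℝ → ℝ) (m : ℤ) (p : ℝ) (g : ℝ → ℝ) : ℝ :=
  ∫ r in Set.Ioi (0:ℝ),
    ((deriv g r) ^ 2 + ((m : ℝ) ^ 2 - 1/4) * r⁻¹ ^ 2 * (g r) ^ 2
      + (a r + p) ^ 2 * (g r) ^ 2)

/-- The `n`-th min-max value `μ_{n,m}(p)`: the infimum, over `n`-dimensional subspaces `V` of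
`C_c^∞((0,∞))`, of the supremum of the Rayleigh quotient `l_m[g;p]/‖g‖²` over nonzero `g ∈ V`. -/
def muRadial (a : ℝ → ℝ) (m : ℤ) (n : ℕ) (p : ℝ) : ℝ :=
  sInf {S : ℝ | ∃ f : Fin n → (ℝ → ℝ), (∀ i, IsTestR (f i)) ∧ LinearIndependent ℝ f ∧
    S = sSup {R : ℝ | ∃ g : ℝ → ℝ, g ∈ Submodule.span ℝ (Set.range f) ∧ g ≠ 0 ∧
      R = lForm a m p g / ∫ r in Set.Ioi (0:ℝ), (g r) ^ 2}}

open Polynomial in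
lemma aux_integrable (b : ℝ) (hb : 0 < b) (P : ℝ[X]) :
    Integrable (fun x : ℝ => P.eval x * Real.exp (-b * x ^ 2)) := by
  induction P using Polynomial.induction_on' with
  | add p q hp hq => 
    simp only [eval_add, add_mul]
    exact hp.add hq
  | monomial n c =>
    have h := integrable_rpow_mul_exp_neg_mul_sq hb (s := (n:ℝ)) (by have := n.cast_nonneg (α := ℝ); linarith)
    simp only [Real.rpow_natCast] at h
    simpa [eval_monomial, mul_assoc] using h.const_mul c

open Polynomial in
/-- Gaussian functional -/
def gI (b : ℝ) (P : ℝ[X]) : ℝ := ∫ x : ℝ, P.eval x * Real.exp (-b * x ^ 2)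

section gauss
open Polynomial

variable {b : ℝ} 

lemma gI_add (hb : 0 < b) (P Q : ℝ[X]) : gI b (P + Q) = gI b P + gI b Q := by
  unfold gI
  rw [← integral_add (aux_integrable b hb P) (aux_integrable b hb Q)]
  simp [add_mul]

lemma gI_C_mul (t : ℝ) (P : ℝ[X]) : gI b (C t * P) = t * gI b P := by
  unfold gI
  rw [← integral_const_mul]
  simp [mul_assoc]

lemma gI_sub (hb : 0 < b) (P Q : ℝ[X]) : gI b (P - Q) = gI b P - gI b Q := by
  unfold gI
  rw [← integral_sub (aux_integrable b hb P) (aux_integrable b hb Q)]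
  simp [sub_mul]

lemma gI_sq_nonneg (P : ℝ[X]) : 0 ≤ gI b (P ^ 2) := by
  unfold gI
  apply integral_nonneg
  intro x
  simp only [eval_pow, Pi.zero_apply]
  positivity

lemma gI_ibp (hb : 0 < b) (P : ℝ[X]) : gI b (derivative P - C (2 * b) * X * P) = 0 := by
  unfold gI
  refine integral_eq_zero_of_hasDerivAt_of_integrable
    (f := fun x : ℝ => P.eval x * Real.exp (-b * x ^ 2)) ?_ (aux_integrable b hb _)
    (aux_integrable b hb P)
  intro x
  have h1 : HasDerivAt (fun x : ℝ => Real.exp (-b * x ^ 2))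
      (Real.exp (-b * x ^ 2) * (-b * (2 * x))) x := by
    have := ((hasDerivAt_pow 2 x).const_mul (-b)).exp
    simpa using this
  have h := (P.hasDerivAt x).mul h1
  refine h.congr_deriv ?_
  simp
  ring

lemma gI_dirichlet (hb : 0 < b) (P Q : ℝ[X]) :
    gI b (derivative P * derivative Q) =
      gI b (Q * (C (2 * b) * X * derivative P - derivative (derivative P))) := by
  have h := gI_ibp hb (derivative P * Q)
  rw [← sub_eq_zero, ← gI_sub hb, ← h]
  congr 1
  rw [derivative_mul]
  ring

lemma gI_markov (hb : 0 < b) (d : ℕ) : ∀ P : ℝ[X], P.natDegree ≤ d →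
    gI b (derivative P ^ 2) ≤ 2 * b * d * gI b (P ^ 2) := by
  induction d with
  | zero =>
    intro P hP
    rw [derivative_of_natDegree_zero (by omega)]
    simp [gI]
  | succ d ih =>
    intro P hP
    have h1 := ih (derivative P) ((natDegree_derivative_le P).trans (by omega))
    set LP := C (2 * b) * X * derivative P - derivative (derivative P) with hLP
    have e1 : gI b (derivative P ^ 2) = gI b (P * LP) := by
      rw [sq, gI_dirichlet hb]
    have e2 : gI b (LP ^ 2) = gI b (derivative P * derivative LP) := by
      rw [sq, gI_dirichlet hb]
    have e3 : derivative P * derivative LP = C (2 * b) * derivative P ^ 2 +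
        derivative P * (C (2 * b) * X * derivative (derivative P)
          - derivative (derivative (derivative P))) := by
      rw [hLP]; simp only [derivative_sub, derivative_mul, derivative_C, derivative_X]
      ring
    rw [e3, gI_add hb, ← gI_dirichlet hb, gI_C_mul, ← sq] at e2
    set t : ℝ := 2 * b * ((d + 1 : ℕ) : ℝ) with ht
    have htpos : 0 < t := by positivity
    have h0 := gI_sq_nonneg (b := b) (LP - C t * P)
    have e4 : (LP - C t * P) ^ 2 = LP ^ 2 - C (2 * t) * (P * LP) + C (t ^ 2) * P ^ 2 := by
      simp only [C_mul, C_pow]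
      rw [show (C (2:ℝ)) = 2 from rfl]; ring
    rw [e4, gI_add hb, gI_sub hb, gI_C_mul, gI_C_mul, ← e1, e2] at h0
    have : t * gI b (derivative P ^ 2) ≤ t * (t * gI b (P ^ 2)) := by
      push_cast at ht
      have : t * gI b (derivative P ^ 2) = 2 * b * d * gI b (derivative P ^ 2) + 2 * b * gI b (derivative P ^ 2) := by
        rw [ht]; ring
      nlinarith
    exact le_of_mul_le_mul_left this htpos

lemma gI_energy_eq (hb : 0 < b) (P : ℝ[X]) :
    gI b ((derivative P - C b * X * P) ^ 2) + b ^ 2 * gI b ((X * P) ^ 2) =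
      gI b (derivative P ^ 2) + b * gI b (P ^ 2) := by
  have h := gI_ibp hb (X * P ^ 2)
  rw [← gI_C_mul, ← gI_C_mul, ← gI_add hb, ← gI_add hb, ← sub_eq_zero, ← gI_sub hb,
    ← mul_zero (-b), ← h, ← gI_C_mul]
  congr 1
  simp only [derivative_mul, derivative_X, derivative_pow, C_mul, C_pow, C_neg]
  simp
  rw [show (C (2:ℝ)) = 2 from rfl]
  ring

lemma gI_energy (hb : 0 < b) (d : ℕ) (P : ℝ[X]) (hP : P.natDegree ≤ d) :
    gI b ((derivative P - C b * X * P) ^ 2) + b ^ 2 * gI b ((X * P) ^ 2) ≤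
      (2 * d + 1) * b * gI b (P ^ 2) := by
  rw [gI_energy_eq hb]
  have := gI_markov hb d P hP
  linarith

lemma gI_mom2 (hb : 0 < b) (d : ℕ) (P : ℝ[X]) (hP : P.natDegree ≤ d) :
    gI b ((X * P) ^ 2) ≤ (2 * d + 1) / b * gI b (P ^ 2) := by
  have h := gI_energy hb d P hP
  have h0 := gI_sq_nonneg (b := b) (derivative P - C b * X * P)
  have : b ^ 2 * gI b ((X * P) ^ 2) ≤ b ^ 2 * ((2 * d + 1) / b * gI b (P ^ 2)) := by
    have : b ^ 2 * ((2 * d + 1) / b * gI b (P ^ 2)) = (2 * d + 1) * b * gI b (P ^ 2) := by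
      field_simp
    linarith
  exact le_of_mul_le_mul_left this (by positivity)

lemma gI_mom4 (hb : 0 < b) (d : ℕ) (P : ℝ[X]) (hP : P.natDegree ≤ d) :
    gI b ((X ^ 2 * P) ^ 2) ≤ (2 * d + 3) / b * ((2 * d + 1) / b) * gI b (P ^ 2) := by
  have h1 := gI_mom2 hb d P hP
  have h2 := gI_mom2 hb (d + 1) (X * P) (natDegree_mul_le.trans (by
    have := natDegree_X_le (R := ℝ); omega))
  rw [← mul_assoc, ← sq] at h2
  push_cast at h2
  refine h2.trans ?_
  rw [mul_assoc ((2 * (d:ℝ) + 3) / b)]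
  rw [show 2 * ((d:ℝ) + 1) + 1 = 2 * d + 3 by ring]
  gcongr

lemma gI_total (hb : 0 < b) (d : ℕ) : ∃ D > 0, ∀ P : ℝ[X], P.natDegree ≤ d →
    gI b ((X ^ 2 * P) ^ 2) ≤ D * gI b (P ^ 2) ∧
    gI b ((X ^ 2 * (derivative P - C b * X * P)) ^ 2) ≤ D * gI b (P ^ 2) := by
  refine ⟨(2 * d + 3) / b * ((2 * d + 1) / b) +
    (2 * (d + 1 : ℕ) + 3) / b * ((2 * (d + 1 : ℕ) + 1) / b) * ((2 * d + 1) * b), by positivity, ?_⟩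
  intro P hP
  have h0 := gI_sq_nonneg (b := b) P
  have hX0 := gI_sq_nonneg (b := b) (X * P)
  have h1 := gI_mom4 hb d P hP
  have hdeg : (derivative P - C b * X * P).natDegree ≤ d + 1 := by
    refine (natDegree_sub_le _ _).trans (max_le ?_ ?_)
    · exact (natDegree_derivative_le P).trans (by omega)
    · refine natDegree_mul_le.trans ?_
      have := (natDegree_C_mul_le b (X : ℝ[X])).trans natDegree_X_le
      omega
  have h2 := gI_mom4 hb (d + 1) _ hdeg
  have h3 := gI_energy hb d P hP
  have h4 : gI b ((derivative P - C b * X * P) ^ 2) ≤ (2 * d + 1) * b * gI b (P ^ 2) := by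
    nlinarith [sq_nonneg b]
  set A : ℝ := (2 * d + 3) / b * ((2 * d + 1) / b) 
  have hA : 0 ≤ A := by positivity
  set B : ℝ := (2 * (d + 1 : ℕ) + 3) / b * ((2 * (d + 1 : ℕ) + 1) / b)
  have hB : 0 ≤ B := by positivity
  have hB' : 0 ≤ B * ((2 * d + 1) * b) := by positivity
  constructor
  · nlinarith
  · have := mul_le_mul_of_nonneg_left h4 hB
    nlinarith

end gauss

/-- the cutoff -/
def bmp : ContDiffBump (0:ℝ) := ⟨1, 2, by norm_num, by norm_num⟩

lemma bmp_one {x : ℝ} (hx : |x| ≤ 1) : bmp x = 1 := by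
  apply bmp.one_of_mem_closedBall
  simpa [bmp, Real.norm_eq_abs] using hx

lemma bmp_zero {x : ℝ} (hx : 2 ≤ |x|) : bmp x = 0 := by
  apply bmp.zero_of_le_dist
  simpa [bmp, Real.norm_eq_abs] using hx

lemma bmp_contDiff : ContDiff ℝ (⊤ : ℕ∞) (bmp : ℝ → ℝ) := bmp.contDiff

lemma bmp_deriv_bound : ∃ M > 0, ∀ x : ℝ, |deriv bmp x| ≤ M := by
  have h1 : HasCompactSupport (deriv (bmp : ℝ → ℝ)) := bmp.hasCompactSupport.deriv
  have h2 : Continuous (deriv (bmp : ℝ → ℝ)) := bmp_contDiff.continuous_deriv (by simp)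
  obtain ⟨M, hM⟩ := h2.bounded_above_of_compact_support h1
  refine ⟨|M| + 1, by positivity, fun x => ?_⟩
  have := hM x
  rw [Real.norm_eq_abs] at this
  linarith [le_abs_self M]

lemma bmp_deriv_zero {x : ℝ} (hx : |x| < 1) : deriv bmp x = 0 := by
  have : (bmp : ℝ → ℝ) =ᶠ[nhds x] fun _ => 1 := by
    have : ∀ᶠ y in nhds x, |y| < 1 := continuous_abs.continuousAt.eventually_lt continuousAt_const hx
    filter_upwards [this] with y hy
    exact bmp_one hy.le
  rw [this.deriv_eq]; simp

section trial
open Polynomial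

/-- the trial functions -/
def trial (b ρ : ℝ) : ℝ[X] →ₗ[ℝ] (ℝ → ℝ) where
  toFun P := fun r => bmp ((r - ρ) / (ρ / 4)) * (P.eval (r - ρ) * Real.exp (-b / 2 * (r - ρ) ^ 2))
  map_add' P Q := by ext r; simp; ring
  map_smul' c P := by ext r; simp; ring

lemma trial_apply (b ρ : ℝ) (P : ℝ[X]) (r : ℝ) : trial b ρ P r =
    bmp ((r - ρ) / (ρ / 4)) * (P.eval (r - ρ) * Real.exp (-b / 2 * (r - ρ) ^ 2)) := rfl

lemma trial_zero {b ρ : ℝ} (hρ : 0 < ρ) (P : ℝ[X]) {r : ℝ} (hr : r ∉ Icc (ρ / 2) (3 * ρ / 2)) :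
    trial b ρ P r = 0 := by
  rw [trial_apply, bmp_zero, zero_mul]
  rw [abs_div, abs_of_pos (show 0 < ρ / 4 by positivity), le_div_iff₀ (by positivity)]
  by_contra h
  push Not at h
  rw [abs_lt] at h
  exact hr ⟨by linarith, by linarith⟩

lemma trial_tsupport {b ρ : ℝ} (hρ : 0 < ρ) (P : ℝ[X]) :
    tsupport (trial b ρ P) ⊆ Icc (ρ / 2) (3 * ρ / 2) := by
  apply closure_minimal _ isClosed_Icc
  intro r hr
  by_contra h
  exact hr (trial_zero hρ P h)

lemma trial_contDiff (b ρ : ℝ) (P : ℝ[X]) : ContDiff ℝ (⊤ : ℕ∞) (trial b ρ P) := by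
  have : ContDiff ℝ (⊤ : ℕ∞) (fun r => bmp ((r - ρ) / (ρ / 4)) *
      (P.eval (r - ρ) * Real.exp (-b / 2 * (r - ρ) ^ 2))) := by
    have h1 : ContDiff ℝ (⊤ : ℕ∞) (fun r : ℝ => r - ρ) := by fun_prop
    have h2 : ContDiff ℝ (⊤ : ℕ∞) (fun r : ℝ => (r - ρ) / (ρ / 4)) := by fun_prop
    refine (bmp_contDiff.comp h2).mul (ContDiff.mul ?_ ?_)
    · have h3 : ContDiff ℝ (⊤ : ℕ∞) (fun x : ℝ => P.eval x) := by
        simpa [Polynomial.aeval_def] using P.contDiff_aeval (𝕜 := ℝ) (⊤ : ℕ∞)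
      exact h3.comp h1
    · fun_prop
  exact this

lemma trial_isTest {b ρ : ℝ} (hρ : 0 < ρ) (P : ℝ[X]) : IsTestR (trial b ρ P) := by
  refine ⟨trial_contDiff b ρ P, ?_, ?_⟩
  · exact HasCompactSupport.of_support_subset_isCompact isCompact_Icc
      ((subset_tsupport _).trans (trial_tsupport hρ P))
  · refine (trial_tsupport hρ P).trans ?_
    intro r hr
    have := hr.1
    simp only [mem_Ioi]
    linarith

lemma trial_inj {b ρ : ℝ} (hρ : 0 < ρ) : Function.Injective (trial b ρ) := by
  rw [← LinearMap.ker_eq_bot, LinearMap.ker_eq_bot']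
  intro P hP
  apply Polynomial.eq_zero_of_infinite_isRoot
  refine (Ioo_infinite (show (0:ℝ) < ρ / 4 by positivity)).mono ?_
  intro x hx
  have h := congrFun hP (x + ρ)
  rw [trial_apply, add_sub_cancel_right, bmp_one, one_mul] at h
  · simpa [Real.exp_ne_zero] using h
  · rw [abs_div, abs_of_pos (show 0 < ρ / 4 by positivity), div_le_one (by positivity),
      abs_of_pos hx.1]
    exact hx.2.le

lemma trial_deriv (b ρ : ℝ) (P : ℝ[X]) (r : ℝ) : deriv (trial b ρ P) r =
    deriv bmp ((r - ρ) / (ρ / 4)) * (1 / (ρ / 4)) * (P.eval (r - ρ) * Real.exp (-b / 2 * (r - ρ) ^ 2))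
    + bmp ((r - ρ) / (ρ / 4)) * ((derivative P - C b * X * P).eval (r - ρ)
      * Real.exp (-b / 2 * (r - ρ) ^ 2)) := by
  have h1 : HasDerivAt (fun r : ℝ => r - ρ) 1 r := (hasDerivAt_id r).sub_const ρ
  have h2 : HasDerivAt (fun r : ℝ => (r - ρ) / (ρ / 4)) (1 / (ρ / 4)) r := h1.div_const _
  have h3 : HasDerivAt bmp (deriv bmp ((r - ρ) / (ρ / 4))) ((r - ρ) / (ρ / 4)) :=
    (bmp_contDiff.differentiable (by simp) _).hasDerivAt
  have h4 := h3.comp r h2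
  have h5 := (P.hasDerivAt (r - ρ)).comp r h1
  have h6 : HasDerivAt (fun r : ℝ => Real.exp (-b / 2 * (r - ρ) ^ 2))
      (Real.exp (-b / 2 * (r - ρ) ^ 2) * (-b / 2 * (2 * (r - ρ)))) r := by
    have := ((h1.pow 2).const_mul (-b / 2)).exp
    simpa using this
  have h7 : HasDerivAt (trial b ρ P) _ r := h4.mul (h5.mul h6)
  rw [h7.deriv]
  simp only [Function.comp_apply, eval_sub, eval_mul, eval_C, eval_X]
  ring

lemma exp_half_sq (b x : ℝ) : Real.exp (-b / 2 * x ^ 2) ^ 2 = Real.exp (-b * x ^ 2) := by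
  rw [sq, ← Real.exp_add]; congr 1; ring

/-- pointwise lower bound on the square of a trial function -/
lemma trial_sq_ge {b ρ : ℝ} (hρ : 0 < ρ) (P : ℝ[X]) (r : ℝ) :
    (P ^ 2 - C (256 / ρ ^ 4) * (X ^ 2 * P) ^ 2).eval (r - ρ) * Real.exp (-b * (r - ρ) ^ 2)
      ≤ trial b ρ P r ^ 2 := by
  rw [trial_apply, mul_pow (bmp _), mul_pow (P.eval _), exp_half_sq]
  simp only [eval_sub, eval_pow, eval_mul, eval_C, eval_X]
  set x := r - ρ
  set p := P.eval x
  set e := Real.exp (-b * x ^ 2)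
  have he : 0 < e := Real.exp_pos _
  have hp := mul_nonneg (sq_nonneg p) he.le
  rcases le_or_gt |x / (ρ / 4)| 1 with h | h
  · rw [bmp_one h]
    have : 0 ≤ (256 / ρ ^ 4 * (x ^ 2 * p) ^ 2) * e := by positivity
    nlinarith
  · have h2 : 1 ≤ 256 / ρ ^ 4 * x ^ 4 := by
      have : 1 ≤ |x / (ρ / 4)| ^ 4 := one_le_pow₀ h.le
      rw [show |x / (ρ / 4)| ^ 4 = (x / (ρ / 4)) ^ 4 from (by decide : Even 4).pow_abs _] at this
      calc (1:ℝ) ≤ _ := this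
        _ = _ := by field_simp; norm_num
    have h3 : (p ^ 2 - 256 / ρ ^ 4 * (x ^ 2 * p) ^ 2) * e ≤ 0 := by
      have : (p ^ 2 - 256 / ρ ^ 4 * (x ^ 2 * p) ^ 2) * e = (1 - 256 / ρ ^ 4 * x ^ 4) * (p ^ 2 * e) := by
        ring
      rw [this]
      exact mul_nonpos_of_nonpos_of_nonneg (by linarith) hp
    exact h3.trans (by positivity)

lemma trial_sq_le {b ρ : ℝ} (P : ℝ[X]) (r : ℝ) :
    trial b ρ P r ^ 2 ≤ (P ^ 2).eval (r - ρ) * Real.exp (-b * (r - ρ) ^ 2) := by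
  rw [trial_apply, mul_pow, mul_pow, exp_half_sq, eval_pow]
  have h0 := bmp.nonneg (x := (r - ρ) / (ρ / 4))
  have h1 := bmp.le_one (x := (r - ρ) / (ρ / 4))
  have : (bmp ((r - ρ) / (ρ / 4))) ^ 2 ≤ 1 := pow_le_one₀ h0 h1
  have hp : 0 ≤ (eval (r - ρ) P) ^ 2 * Real.exp (-b * (r - ρ) ^ 2) := by positivity
  nlinarith

lemma trial_deriv_sq_le {b ρ M : ℝ} (hρ : 4 ≤ ρ) (hM : ∀ x, |deriv bmp x| ≤ M)
    (P : ℝ[X]) (r : ℝ) :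
    deriv (trial b ρ P) r ^ 2 ≤
      ((derivative P - C b * X * P) ^ 2 + C ((2 + 2 * M ^ 2) * (256 / ρ ^ 4)) *
        ((X ^ 2 * P) ^ 2 + (X ^ 2 * (derivative P - C b * X * P)) ^ 2)).eval (r - ρ)
        * Real.exp (-b * (r - ρ) ^ 2) := by
  rw [trial_deriv, ← exp_half_sq]
  set Q := derivative P - C b * X * P
  simp only [eval_add, eval_pow, eval_mul, eval_C, eval_X]
  have hh := hM ((r - ρ) / (ρ / 4))
  have h0 := bmp.nonneg (x := (r - ρ) / (ρ / 4))
  have h1 := bmp.le_one (x := (r - ρ) / (ρ / 4))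
  set x := r - ρ
  set e := Real.exp (-b / 2 * x ^ 2)
  set p := P.eval x
  set q := Q.eval x
  rcases lt_or_ge |x / (ρ / 4)| 1 with h | h
  · rw [bmp_one h.le, bmp_deriv_zero h]
    have : 0 ≤ (2 + 2 * M ^ 2) * (256 / ρ ^ 4) * ((x ^ 2 * p) ^ 2 + (x ^ 2 * q) ^ 2) * e ^ 2 := by
      positivity
    nlinarith
  · have h2 : 1 ≤ 256 / ρ ^ 4 * x ^ 4 := by
      have : 1 ≤ |x / (ρ / 4)| ^ 4 := one_le_pow₀ h
      rw [show |x / (ρ / 4)| ^ 4 = (x / (ρ / 4)) ^ 4 from (by decide : Even 4).pow_abs _] at this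
      calc (1:ℝ) ≤ _ := this
        _ = _ := by field_simp; norm_num
    set χ := bmp (x / (ρ / 4))
    set δ := deriv bmp (x / (ρ / 4))
    set s := 1 / (ρ / 4)
    have hs0 : 0 < s := by positivity
    have hs1 : s ≤ 1 := by
      rw [div_le_one (by positivity)]; linarith
    have k1 : χ ^ 2 ≤ 1 := pow_le_one₀ h0 h1
    have k2 : (δ * s) ^ 2 ≤ M ^ 2 := by
      rw [sq_le_sq, abs_mul, abs_of_pos hs0]
      calc |δ| * s ≤ |δ| * 1 := by gcongr
        _ ≤ |M| := by rw [mul_one]; exact hh.trans (le_abs_self M)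
    have k3 : (δ * s * (p * e) + χ * (q * e)) ^ 2 ≤
        2 * ((δ * s) ^ 2 * (p * e) ^ 2) + 2 * (χ ^ 2 * (q * e) ^ 2) := by
      nlinarith [sq_nonneg (δ * s * (p * e) - χ * (q * e))]
    have k4 : (δ * s) ^ 2 * (p * e) ^ 2 ≤ M ^ 2 * (p * e) ^ 2 := by gcongr
    have k5 : χ ^ 2 * (q * e) ^ 2 ≤ 1 * (q * e) ^ 2 := by gcongr
    have k6 : 0 ≤ (2 + 2 * M ^ 2) * ((p * e) ^ 2 + (q * e) ^ 2) := by positivity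
    have k7 := mul_le_mul_of_nonneg_right h2 k6
    have k8 : 0 ≤ M ^ 2 * (q * e) ^ 2 := by positivity
    have k9 : 0 ≤ (p * e) ^ 2 := by positivity
    have k10 : 0 ≤ (q * e) ^ 2 := by positivity
    calc _ ≤ _ := k3
      _ ≤ 1 * ((2 + 2 * M ^ 2) * ((p * e) ^ 2 + (q * e) ^ 2)) := by nlinarith
      _ ≤ _ := k7
      _ ≤ (256 / ρ ^ 4 * x ^ 4 * ((2 + 2 * M ^ 2) * ((p * e) ^ 2 + (q * e) ^ 2))) + (q * e) ^ 2 := by linarith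
      _ = _ := by ring

lemma trial_norm_ge {b ρ : ℝ} (hb : 0 < b) (hρ : 0 < ρ) (P : ℝ[X]) :
    gI b (P ^ 2) - 256 / ρ ^ 4 * gI b ((X ^ 2 * P) ^ 2) ≤
      ∫ r in Ioi (0:ℝ), trial b ρ P r ^ 2 := by
  have hc : Continuous (trial b ρ P) := (trial_contDiff b ρ P).continuous
  have hint : Integrable (fun r => trial b ρ P r ^ 2) := by
    refine Continuous.integrable_of_hasCompactSupport (hc.pow 2) ?_
    refine HasCompactSupport.of_support_subset_isCompact (isCompact_Icc (a := ρ / 2) (b := 3 * ρ / 2)) ?_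
    intro r hr
    by_contra h
    exact hr (by simp [trial_zero hρ P h])
  rw [setIntegral_eq_integral_of_forall_compl_eq_zero, ← gI_C_mul, ← gI_sub hb]
  · unfold gI
    rw [← integral_sub_right_eq_self _ ρ]
    refine integral_mono ?_ hint (fun r => trial_sq_ge hρ P r)
    exact (aux_integrable b hb _).comp_sub_right ρ
  · intro r hr
    rw [trial_zero hρ P, zero_pow two_ne_zero]
    intro h
    apply hr
    have := h.1
    simp only [mem_Ioi]; linarith

lemma trial_form_le {b c ρ M r₁ : ℝ} (hb : 0 < b) (hρ : 4 ≤ ρ) (hM : ∀ x, |deriv bmp x| ≤ M)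
    (a : ℝ → ℝ) (k : ℝ) (hr₁ : r₁ ≤ ρ / 2) (ha : ∀ r ≥ r₁, a r = b * r + c) (hk : k = b * ρ + c)
    (P : ℝ[X])
    (hi : IntegrableOn (fun r => (deriv (trial b ρ P) r) ^ 2 + (((0:ℤ) : ℝ) ^ 2 - 1/4) * r⁻¹ ^ 2
        * (trial b ρ P r) ^ 2 + (a r + -k) ^ 2 * (trial b ρ P r) ^ 2) (Ioi 0)) :
    lForm a 0 (-k) (trial b ρ P) ≤
      gI b ((derivative P - C b * X * P) ^ 2) + b ^ 2 * gI b ((X * P) ^ 2)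
      + (2 + 2 * M ^ 2) * (256 / ρ ^ 4) * (gI b ((X ^ 2 * P) ^ 2)
        + gI b ((X ^ 2 * (derivative P - C b * X * P)) ^ 2))
      - 1 / (9 * ρ ^ 2) * ∫ r in Ioi (0:ℝ), trial b ρ P r ^ 2 := by
  have hρ0 : 0 < ρ := by linarith
  have hc : Continuous (trial b ρ P) := (trial_contDiff b ρ P).continuous
  have hint : Integrable (fun r => trial b ρ P r ^ 2) := by
    refine Continuous.integrable_of_hasCompactSupport (hc.pow 2) ?_
    refine HasCompactSupport.of_support_subset_isCompact (isCompact_Icc (a := ρ / 2) (b := 3 * ρ / 2)) ?_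
    intro r hr
    by_contra h
    exact hr (by simp [trial_zero hρ0 P h])
  set Q := derivative P - C b * X * P with hQ
  set G : ℝ[X] := (Q ^ 2 + C ((2 + 2 * M ^ 2) * (256 / ρ ^ 4)) *
        ((X ^ 2 * P) ^ 2 + (X ^ 2 * Q) ^ 2)) + C (b ^ 2) * (X * P) ^ 2 with hG
  have hGI : gI b (Q ^ 2) + b ^ 2 * gI b ((X * P) ^ 2)
      + (2 + 2 * M ^ 2) * (256 / ρ ^ 4) * (gI b ((X ^ 2 * P) ^ 2)
        + gI b ((X ^ 2 * Q) ^ 2)) = gI b G := by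
    rw [hG, gI_add hb, gI_add hb, gI_C_mul, gI_C_mul, gI_add hb]; ring
  rw [hGI]
  have hGint : Integrable (fun r => G.eval (r - ρ) * Real.exp (-b * (r - ρ) ^ 2)) :=
    (aux_integrable b hb G).comp_sub_right ρ
  have hG0 : ∀ r, 0 ≤ G.eval (r - ρ) * Real.exp (-b * (r - ρ) ^ 2) := by
    intro r
    simp only [hG, eval_add, eval_pow, eval_mul, eval_C, eval_X]
    positivity
  have step1 : ∫ r in Ioi (0:ℝ), G.eval (r - ρ) * Real.exp (-b * (r - ρ) ^ 2) ≤ gI b G := by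
    unfold gI
    rw [← integral_sub_right_eq_self (μ := volume) (fun x : ℝ => eval x G * Real.exp (-b * x ^ 2)) ρ]
    exact setIntegral_le_integral hGint (Eventually.of_forall hG0)
  refine le_trans ?_ (sub_le_sub_right step1 _)
  rw [← integral_const_mul, ← integral_sub hGint.integrableOn (hint.integrableOn.const_mul _)]
  unfold lForm
  refine setIntegral_mono_on hi (hGint.integrableOn.sub (hint.integrableOn.const_mul _))
    measurableSet_Ioi ?_
  intro r hr
  have hr0 : 0 < r := hr
  have d1 := trial_deriv_sq_le hρ hM P r (b := b)
  have d2 : b ^ 2 * (r - ρ) ^ 2 * trial b ρ P r ^ 2 ≤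
      b ^ 2 * (r - ρ) ^ 2 * ((P ^ 2).eval (r - ρ) * Real.exp (-b * (r - ρ) ^ 2)) :=
    mul_le_mul_of_nonneg_left (trial_sq_le P r) (by positivity)
  have d3 : (a r + -k) ^ 2 * trial b ρ P r ^ 2 = b ^ 2 * (r - ρ) ^ 2 * trial b ρ P r ^ 2 := by
    by_cases h : r ∈ Icc (ρ / 2) (3 * ρ / 2)
    · rw [ha r (hr₁.trans h.1), hk]; ring
    · rw [trial_zero hρ0 P h]; ring
  have d4 : 1 / (9 * ρ ^ 2) * trial b ρ P r ^ 2 ≤ 1 / 4 * r⁻¹ ^ 2 * trial b ρ P r ^ 2 := by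
    by_cases h : r ∈ Icc (ρ / 2) (3 * ρ / 2)
    · refine mul_le_mul_of_nonneg_right ?_ (sq_nonneg _)
      have : 1 / 4 * r⁻¹ ^ 2 = 1 / (4 * r ^ 2) := by field_simp
      rw [this]
      apply one_div_le_one_div_of_le (by positivity)
      have := h.2
      nlinarith
    · rw [trial_zero hρ0 P h]; simp
  have d5 : G.eval (r - ρ) * Real.exp (-b * (r - ρ) ^ 2) =
      (Q ^ 2 + C ((2 + 2 * M ^ 2) * (256 / ρ ^ 4)) *
        ((X ^ 2 * P) ^ 2 + (X ^ 2 * Q) ^ 2)).eval (r - ρ) * Real.exp (-b * (r - ρ) ^ 2)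
      + b ^ 2 * (r - ρ) ^ 2 * ((P ^ 2).eval (r - ρ) * Real.exp (-b * (r - ρ) ^ 2)) := by
    rw [hG, eval_add, eval_mul, eval_C]
    simp only [eval_pow, eval_mul, eval_X]; ring
  simp only [d5, d3]
  rw [← hQ] at d1
  have d6 : (((0:ℤ) : ℝ) ^ 2 - 1/4) * r⁻¹ ^ 2 * (trial b ρ P r) ^ 2 =
    - (1 / 4 * r⁻¹ ^ 2 * trial b ρ P r ^ 2) := by push_cast; ring
  rw [d6]
  linarith

end trial

lemma final_algebra {A D u J N F : ℝ} (hA : 0 ≤ A) (hD : 0 ≤ D) (hu : 0 < u) (hu1 : u ≤ 1)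
    (hN : 0 ≤ N) (h1 : 36 * (A + 1) * D * u ≤ 1)
    (hF : F ≤ (A + D * u ^ 2) * J - u / 9 * N) (hJ : (1 - D * u ^ 2) * J ≤ N) :
    F ≤ (A - u / 18) * N := by
  set ε := D * u ^ 2 with hε
  have e0 : 0 ≤ ε := by positivity
  have e1 : 36 * (A + 1) * ε ≤ u := by
    have := mul_le_mul_of_nonneg_right h1 hu.le
    rw [hε]; linarith
  have e2 : ε ≤ 1 / 2 := by nlinarith
  have j1 : J ≤ (1 + 2 * ε) * N := by
    have := mul_le_mul_of_nonneg_left hJ (show 0 ≤ 1 + 2 * ε by positivity)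
    rcases le_or_gt J 0 with h | h
    · exact h.trans (by positivity)
    · nlinarith [mul_nonneg (mul_nonneg e0 (show 0 ≤ 1 - 2 * ε by linarith)) h.le]
  have j2 : (A + ε) * J ≤ (A + ε) * ((1 + 2 * ε) * N) :=
    mul_le_mul_of_nonneg_left j1 (by positivity)
  have j3 : (A + ε) * (1 + 2 * ε) ≤ A + u / 18 := by nlinarith
  have j4 := mul_le_mul_of_nonneg_right j3 hN
  nlinarith

lemma affine_of_deriv {a : ℝ → ℝ} {b r₁ : ℝ} (h : ∀ r ≥ r₁, HasDerivAt a b r) :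
    ∀ r ≥ r₁, a r = b * r + (a r₁ - b * r₁) := by
  intro r hr
  have hd : ∀ x ≥ r₁, HasDerivAt (fun x => a x - b * x) 0 x := by
    intro x hx
    have := (h x hx).sub ((hasDerivAt_id x).const_mul b)
    exact this.congr_deriv (by ring)
  have := constant_of_has_deriv_right_zero (f := fun x => a x - b * x) (a := r₁) (b := r)
    (fun x hx => (hd x hx.1).continuousAt.continuousWithinAt)
    (fun x hx => (hd x hx.1).hasDerivWithinAt) r ⟨hr, le_rfl⟩
  linarith

/-- Proposition 4.8 of the paper: for a field which is constant (`a'(r) = b₀ > 0`) for large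
`r`, the `m = 0` min-max values satisfy `μ_{n,0}(-k) ≤ (2n-1) b₀ - γ_n k⁻²` for large `k`. -/
theorem muRadial_strict_upper_bound (b₀ : ℝ) (hb₀ : 0 < b₀) (a : ℝ → ℝ)
    (ha : ∀ R > (0:ℝ), IntegrableOn (fun r => (a r) ^ 2 * r) (Set.Ioc 0 R))
    (hab : ∃ r₁ > (0:ℝ), ∀ r ≥ r₁, HasDerivAt a b₀ r) :
    ∀ n : ℕ, 1 ≤ n → ∃ γ > (0:ℝ), ∃ k₀ > (0:ℝ), ∀ k ≥ k₀,
      muRadial a 0 n (-k) ≤ (2 * (n : ℝ) - 1) * b₀ - γ * k⁻¹ ^ 2 := by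
  intro n hn
  obtain ⟨r₁, hr₁, hd⟩ := hab
  have haff := affine_of_deriv hd
  set c := a r₁ - b₀ * r₁
  obtain ⟨d, rfl⟩ : ∃ d, n = d + 1 := ⟨n - 1, by omega⟩
  obtain ⟨M, hM0, hM⟩ := bmp_deriv_bound
  obtain ⟨D, hD0, hD⟩ := gI_total hb₀ d
  set A : ℝ := (2 * ((d + 1 : ℕ) : ℝ) - 1) * b₀ with hA
  have hAd : A = (2 * d + 1) * b₀ := by rw [hA]; push_cast; ring
  have hA0 : b₀ ≤ A := by
    rw [hAd]; have := d.cast_nonneg (α := ℝ); nlinarith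
  set D' : ℝ := (2 + 2 * M ^ 2) * 256 * (2 * D) + 256 * D with hD'
  have hD'0 : 0 < D' := by positivity
  set ρ₀ : ℝ := 4 + 2 * r₁ + 36 * (A + 1) * D' with hρ₀
  have hx : 0 ≤ 36 * (A + 1) * D' := by have : 0 ≤ A + 1 := by linarith
                                        positivity
  refine ⟨b₀ ^ 2 / 72, by positivity, b₀ * ρ₀ + |c| + 1, by positivity, ?_⟩
  intro k hk
  set ρ : ℝ := (k - c) / b₀ with hρ
  have hkρ : k = b₀ * ρ + c := by rw [hρ]; field_simp; ring
  have hρge : ρ₀ ≤ ρ := by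
    rw [hρ, le_div_iff₀ hb₀]
    linarith [le_abs_self c]
  have hρ4 : 4 ≤ ρ := by linarith
  have hρ0 : 0 < ρ := by linarith
  have hk1 : 1 ≤ k := by
    have : 0 ≤ b₀ * ρ₀ := by positivity
    linarith [abs_nonneg c]
  have hkb : b₀ ≤ k := by
    have : b₀ * 1 ≤ b₀ * ρ₀ := by gcongr; linarith
    linarith [abs_nonneg c]
  have hk0 : 0 < k := by linarith
  have hρk : b₀ * ρ ≤ 2 * k := by
    have : 0 ≤ b₀ * ρ₀ := by positivity
    linarith [neg_abs_le c]
  set u : ℝ := 1 / ρ ^ 2 with hu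
  have hu0 : 0 < u := by positivity
  have hγ : b₀ ^ 2 / 72 * k⁻¹ ^ 2 ≤ u / 18 := by
    have : (b₀ * ρ) ^ 2 ≤ (2 * k) ^ 2 := by gcongr
    rw [hu, inv_pow, ← div_eq_mul_inv, div_div, div_div, div_le_div_iff₀ (by positivity) (by positivity)]
    nlinarith
  have hu1 : u ≤ 1 := by
    rw [hu, div_le_one (by positivity)]; nlinarith
  have hu2 : 36 * (A + 1) * D' * u ≤ 1 := by
    rw [hu, mul_one_div, div_le_one (by positivity)]
    nlinarith
  set T : ℝ := A - b₀ ^ 2 / 72 * k⁻¹ ^ 2 with hT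
  have hT0 : 0 ≤ T := by
    have h1 : k⁻¹ ^ 2 ≤ k⁻¹ := by
      have : k⁻¹ ≤ 1 := inv_le_one_of_one_le₀ hk1
      have : 0 < k⁻¹ := by positivity
      nlinarith
    have h2 : b₀ * k⁻¹ ≤ 1 := by
      rw [← div_eq_mul_inv, div_le_one hk0]; exact hkb
    have h3 : b₀ ^ 2 * k⁻¹ ^ 2 ≤ b₀ ^ 2 * k⁻¹ := by gcongr
    have h4 : b₀ * (b₀ * k⁻¹) ≤ b₀ * 1 := by gcongr
    rw [hT]; nlinarith
  -- the key estimate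
  have key : ∀ P : Polynomial ℝ, P.natDegree ≤ d →
      lForm a 0 (-k) (trial b₀ ρ P) ≤ T * ∫ r in Ioi (0:ℝ), trial b₀ ρ P r ^ 2 := by
    intro P hP
    have hN : 0 ≤ ∫ r in Ioi (0:ℝ), trial b₀ ρ P r ^ 2 :=
      integral_nonneg (fun r => sq_nonneg _)
    by_cases hi : IntegrableOn (fun r => (deriv (trial b₀ ρ P) r) ^ 2 + (((0:ℤ) : ℝ) ^ 2 - 1/4)
        * r⁻¹ ^ 2 * (trial b₀ ρ P r) ^ 2 + (a r + -k) ^ 2 * (trial b₀ ρ P r) ^ 2) (Ioi 0)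
    · have h1 := trial_form_le hb₀ hρ4 hM a k (by linarith) haff hkρ P hi
      have h2 := trial_norm_ge hb₀ hρ0 P
      have h3 := gI_energy hb₀ d P hP
      obtain ⟨h4, h5⟩ := hD P hP
      have hJ := gI_sq_nonneg (b := b₀) P
      rw [← hAd] at h3
      set N := ∫ r in Ioi (0:ℝ), trial b₀ ρ P r ^ 2
      set J := gI b₀ (P ^ 2)
      have hu4 : 256 / ρ ^ 4 = 256 * u ^ 2 := by rw [hu]; field_simp
      have hu9 : 1 / (9 * ρ ^ 2) = u / 9 := by rw [hu]; field_simp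
      rw [hu4] at h1 h2
      rw [hu9] at h1
      have g1 := mul_le_mul_of_nonneg_left h4 (show 0 ≤ 256 * u ^ 2 by positivity)
      have g2 := mul_le_mul_of_nonneg_left (add_le_add h4 h5)
        (show 0 ≤ (2 + 2 * M ^ 2) * (256 * u ^ 2) by positivity)
      have g3 : 0 ≤ 256 * D * u ^ 2 * J := by positivity
      have g4 : 0 ≤ (2 + 2 * M ^ 2) * 256 * (2 * D) * u ^ 2 * J := by positivity
      have h6 := final_algebra (A := A) (D := D') (u := u) (J := J) (N := N)
        (F := lForm a 0 (-k) (trial b₀ ρ P)) (by linarith) hD'0.le hu0 hu1 hN hu2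
        (by rw [hD']; linarith) (by rw [hD']; linarith)
      refine h6.trans (mul_le_mul_of_nonneg_right ?_ hN)
      rw [hT]; linarith
    · unfold lForm
      rw [integral_undef hi]
      positivity
  -- conclusion
  unfold muRadial
  set SS := {S : ℝ | ∃ f : Fin (d + 1) → (ℝ → ℝ), (∀ i, IsTestR (f i)) ∧ LinearIndependent ℝ f ∧
    S = sSup {R : ℝ | ∃ g : ℝ → ℝ, g ∈ Submodule.span ℝ (Set.range f) ∧ g ≠ 0 ∧
      R = lForm a 0 (-k) g / ∫ r in Set.Ioi (0:ℝ), (g r) ^ 2}} with hSS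
  by_cases hbdd : BddBelow SS
  swap
  · rw [Real.sInf_of_not_bddBelow hbdd]; exact hT0
  let f : Fin (d + 1) → (ℝ → ℝ) := fun i => trial b₀ ρ (Polynomial.X ^ (i : ℕ))
  have hf : ∀ i, IsTestR (f i) := fun i => trial_isTest hρ0 _
  have hli : LinearIndependent ℝ f := by
    have h1 : LinearIndependent ℝ (fun i : Fin (d + 1) => (Polynomial.X ^ (i : ℕ) : Polynomial ℝ)) := by
      have h0 := (Polynomial.basisMonomials ℝ).linearIndependent
      have := h0.comp (fun i : Fin (d + 1) => (i : ℕ)) Fin.val_injective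
      simpa [Function.comp_def, Polynomial.X_pow_eq_monomial] using this
    exact h1.map' (trial b₀ ρ) (LinearMap.ker_eq_bot.mpr (trial_inj hρ0))
  refine (csInf_le hbdd ⟨f, hf, hli, rfl⟩).trans ?_
  refine Real.sSup_le ?_ hT0
  rintro R ⟨g, hg, -, rfl⟩
  obtain ⟨w, hw⟩ := (Submodule.mem_span_range_iff_exists_fun ℝ).mp hg
  have hgP : g = trial b₀ ρ (∑ i : Fin (d + 1), w i • (Polynomial.X ^ (i : ℕ) : Polynomial ℝ)) := by
    rw [← hw, map_sum]
    simp only [map_smul, f]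
  have hdeg : (∑ i : Fin (d + 1), w i • (Polynomial.X ^ (i : ℕ) : Polynomial ℝ)).natDegree ≤ d := by
    refine Polynomial.natDegree_sum_le_of_forall_le _ _ ?_
    intro i _
    refine (Polynomial.natDegree_smul_le _ _).trans ?_
    rw [Polynomial.natDegree_X_pow]
    omega
  have hkey := key _ hdeg
  rw [← hgP] at hkey
  have hN : 0 ≤ ∫ r in Ioi (0:ℝ), g r ^ 2 := integral_nonneg (fun r => sq_nonneg _)
  exact div_le_of_le_mul₀ hN hT0 hkey
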